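/- arXiv:1510.07888 — 2 statements merged into one kernel-verified Lean document; each statement's English description precedes it below -/
import Mathlib

section
/- Let r ≥ 0 and n > 0, and consider two traders with endowments (a, a) and (c, c) on the diagonal (a, c ≥ 0, a + c > 0), each given n tokens, with common utility u(x,y) = √x + √y. Then for every common price level p = q > 0, the sum of the two traders' unique optimal demands for good 1 equals a + c + n/(p(1+r)), which strictly exceeds the total endowment a + c of good 1; hence no market-clearing equilibrium with equal prices p = q exists. -/
/-!
At equal prices the constraint taxing both purchases bounds `x + y` by `s + t + n / (p (1 + r))`.
For a diagonal endowment, spending the tokens equally on the two goods attains this bound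
and is feasible, so by strict concavity of `√` it is the only optimum. Each trader therefore
demands more of both goods than they own, and the market cannot clear.
-/

/-- Utility function u(x,y) = √x + √y. -/
noncomputable def u (x y : ℝ) : ℝ := Real.sqrt x + Real.sqrt y

/-- Budget set of a trader with endowment (s,t), n tokens, prices p,q,
purchase-tax rate r: constraints D, E, F together with nonnegativity. -/
def B (p q r n s t : ℝ) : Set (ℝ × ℝ) :=
  {xy | 0 ≤ xy.1 ∧ 0 ≤ xy.2 ∧
    p * (xy.1 - s) + (1 + r) * q * (xy.2 - t) ≤ n ∧
    (1 + r) * p * (xy.1 - s) + (1 + r) * q * (xy.2 - t) ≤ n ∧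
    (1 + r) * p * (xy.1 - s) + q * (xy.2 - t) ≤ n}

theorem eq_and_eq_of_strictConcaveOn_of_strictMonoOn {D : Set ℝ} {f : ℝ → ℝ} {α β x y k : ℝ}
    (hf : StrictConcaveOn ℝ D f) (hmono : StrictMonoOn f D)
    (hα : 0 < α) (hβ : 0 < β) (hαβ : α + β = 1) (hx : x ∈ D) (hy : y ∈ D) (hk : k ∈ D)
    (hmean : α * x + β * y ≤ k) (hle : f k ≤ α * f x + β * f y) : x = k ∧ y = k := by
  have hxy : x = y := by
    by_contra hne
    have hcombo : α * x + β * y ∈ D := hf.1 hx hy hα.le hβ.le hαβ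
    refine hle.not_gt ?_
    calc α * f x + β * f y < f (α * x + β * y) := hf.2 hx hy hne hα hβ hαβ
      _ ≤ f k := hmono.monotoneOn hcombo hk hmean
  subst hxy
  rw [← add_mul, hαβ, one_mul] at hmean hle
  have hxk : x = k := hmean.antisymm ((hmono.le_iff_le hk hx).1 hle)
  exact ⟨hxk, hxk⟩

theorem eq_and_eq_of_u_diag_le {x y k : ℝ} (hx : 0 ≤ x) (hy : 0 ≤ y) (hk : 0 ≤ k)
    (hsum : x + y ≤ 2 * k) (hle : u k k ≤ u x y) : x = k ∧ y = k := by
  unfold u at hle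
  exact eq_and_eq_of_strictConcaveOn_of_strictMonoOn (α := 1 / 2) (β := 1 / 2)
    Real.strictConcaveOn_sqrt Real.strictMonoOn_sqrt (by norm_num) (by norm_num) (by norm_num)
    hx hy hk (by linarith) (by linarith)

theorem isMaxOn_u_iff_eq_diag {S : Set (ℝ × ℝ)} {k : ℝ} (hk : 0 ≤ k) (hkS : (k, k) ∈ S)
    (hS : ∀ z ∈ S, 0 ≤ z.1 ∧ 0 ≤ z.2 ∧ z.1 + z.2 ≤ 2 * k) {x : ℝ × ℝ} :
    x ∈ S ∧ IsMaxOn (fun z ↦ u z.1 z.2) S x ↔ x = (k, k) := by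
  have eq_diag : ∀ z ∈ S, u k k ≤ u z.1 z.2 → z = (k, k) := by
    intro z hz hle
    obtain ⟨h1, h2, hsum⟩ := hS z hz
    exact Prod.ext_iff.2 (eq_and_eq_of_u_diag_le h1 h2 hk hsum hle)
  constructor
  · rintro ⟨hxS, hmax⟩
    exact eq_diag x hxS (hmax hkS)
  · rintro rfl
    refine ⟨hkS, isMaxOn_iff.2 fun z hz ↦ ?_⟩
    by_contra! hlt
    obtain rfl := eq_diag z hz hlt.le
    exact hlt.false

theorem add_mem_B {p q r n s t d e : ℝ} (hp : 0 ≤ p) (hq : 0 ≤ q) (hr : 0 ≤ r)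
    (hs : 0 ≤ s) (ht : 0 ≤ t) (hd : 0 ≤ d) (he : 0 ≤ e) (hcost : (1 + r) * (p * d + q * e) ≤ n) :
    (s + d, t + e) ∈ B p q r n s t := by
  have tax_fst : 0 ≤ r * (p * d) := by positivity
  have tax_snd : 0 ≤ r * (q * e) := by positivity
  simp only [B, Set.mem_ofPred_eq, add_sub_cancel_left]
  exact ⟨by positivity, by positivity, by linarith, by linarith, by linarith⟩

theorem value_le_of_mem_B {p q r n s t : ℝ} (hr : 0 < 1 + r) {x : ℝ × ℝ}
    (hx : x ∈ B p q r n s t) : p * x.1 + q * x.2 ≤ p * s + q * t + n / (1 + r) := by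
  obtain ⟨-, -, -, hboth, -⟩ := hx
  have hnet : p * (x.1 - s) + q * (x.2 - t) ≤ n / (1 + r) := by
    rw [le_div_iff₀ hr]
    linarith
  linarith

theorem mem_B_diag_and_isMaxOn_u_iff {p r n s : ℝ} (hp : 0 < p) (hr : 0 ≤ r) (hn : 0 ≤ n)
    (hs : 0 ≤ s) {x : ℝ × ℝ} :
    x ∈ B p p r n s s ∧ IsMaxOn (fun z ↦ u z.1 z.2) (B p p r n s s) x ↔
      x = (s + n / (2 * p * (1 + r)), s + n / (2 * p * (1 + r))) := by
  have hr' : 0 < 1 + r := by linarith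
  have hd : 0 ≤ n / (2 * p * (1 + r)) := by positivity
  have hcost : (1 + r) * (p * (n / (2 * p * (1 + r))) + p * (n / (2 * p * (1 + r)))) = n := by
    field_simp
    ring
  refine isMaxOn_u_iff_eq_diag (by positivity)
    (add_mem_B hp.le hp.le hr hs hs hd hd hcost.le) fun z hz ↦ ⟨hz.1, hz.2.1, ?_⟩
  refine le_of_mul_le_mul_left ?_ hp
  calc p * (z.1 + z.2) = p * z.1 + p * z.2 := mul_add ..
    _ ≤ p * s + p * s + n / (1 + r) := value_le_of_mem_B hr' hz
    _ = p * (2 * (s + n / (2 * p * (1 + r)))) := by field_simp; ring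

theorem add_fst_eq_of_isMaxOn_u_B_diag {p r n a c : ℝ} (hp : 0 < p) (hr : 0 ≤ r) (hn : 0 ≤ n)
    (ha : 0 ≤ a) (hc : 0 ≤ c) {xa xc : ℝ × ℝ}
    (hxa : xa ∈ B p p r n a a) (hmaxa : IsMaxOn (fun z ↦ u z.1 z.2) (B p p r n a a) xa)
    (hxc : xc ∈ B p p r n c c) (hmaxc : IsMaxOn (fun z ↦ u z.1 z.2) (B p p r n c c) xc) :
    xa.1 + xc.1 = a + c + n / (p * (1 + r)) := by
  obtain rfl := (mem_B_diag_and_isMaxOn_u_iff hp hr hn ha).1 ⟨hxa, hmaxa⟩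
  obtain rfl := (mem_B_diag_and_isMaxOn_u_iff hp hr hn hc).1 ⟨hxc, hmaxc⟩
  field_simp
  ring

/-- With two traders endowed on the diagonal, at every common price level
p = q the sum of their optimal demands for good 1 equals
a + c + n/(p(1+r)) > a + c, so no market-clearing equilibrium with equal
prices exists. -/
theorem no_equilibrium_on_diagonal (r n a c : ℝ)
    (hr : 0 ≤ r) (hn : 0 < n) (ha : 0 ≤ a) (hc : 0 ≤ c) (hac : 0 < a + c) :
    (∀ p : ℝ, 0 < p →
      ∀ xa ∈ B p p r n a a, (∀ zw ∈ B p p r n a a, u zw.1 zw.2 ≤ u xa.1 xa.2) →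
      ∀ xc ∈ B p p r n c c, (∀ zw ∈ B p p r n c c, u zw.1 zw.2 ≤ u xc.1 xc.2) →
        xa.1 + xc.1 = a + c + n / (p * (1 + r)) ∧ a + c < xa.1 + xc.1) ∧
    ¬ ∃ p : ℝ, 0 < p ∧
      ∃ xa ∈ B p p r n a a, (∀ zw ∈ B p p r n a a, u zw.1 zw.2 ≤ u xa.1 xa.2) ∧
      ∃ xc ∈ B p p r n c c, (∀ zw ∈ B p p r n c c, u zw.1 zw.2 ≤ u xc.1 xc.2) ∧
        xa.1 + xc.1 = a + c ∧ xa.2 + xc.2 = a + c := by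
  have excess_pos : ∀ p : ℝ, 0 < p → 0 < n / (p * (1 + r)) := fun p hp ↦ by positivity
  constructor
  · intro p hp xa hxa hmaxa xc hxc hmaxc
    have hdemand := add_fst_eq_of_isMaxOn_u_B_diag hp hr hn.le ha hc
      hxa (isMaxOn_iff.2 hmaxa) hxc (isMaxOn_iff.2 hmaxc)
    exact ⟨hdemand, by linarith [excess_pos p hp]⟩
  · rintro ⟨p, hp, xa, hxa, hmaxa, xc, hxc, hmaxc, hclear, -⟩
    have hdemand := add_fst_eq_of_isMaxOn_u_B_diag hp hr hn.le ha hc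
      hxa (isMaxOn_iff.2 hmaxa) hxc (isMaxOn_iff.2 hmaxc)
    linarith [excess_pos p hp]
end

section
/- (Mirror of the Edgeworth-box equilibrium theorem, for the second revised contract curve.) Let total endowments X, Y > 0 be split between trader A, endowed with (s1, s2), and trader C, endowed with (X−s1, Y−s2), where 0 ≤ s1 ≤ X and 0 ≤ s2 ≤ Y. Let F = (f1, f2) satisfy 0 < f1 < X and 0 < f2 < Y, and set g = √(f2/f1) and h = √((Y−f2)/(X−f1)). Suppose r > 0 satisfies h = g/(1+r)², that s1 < f1 and s2 > f2, and that (s2 − f2)/(f1 − s1) = √(g·h). Then for any n > 0, the prices p = n/(r·(f1 − s1)) and q = n/(r·(s2 − f2)) satisfy p/q = √(g·h), the bundle (f1, f2) maximizes u(x,y) = √x + √y over B(p,q,r,n,s1,s2), and (X−f1, Y−f2) maximizes u over B(p,q,r,n,X−s1,Y−s2), so these prices and this allocation form a market equilibrium in which trader A buys good 1 and sells good 2. -/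
/-!
A trader who buys good 1 and sells good 2 faces the effective price ratio `(1 + r) * p / q`, and one
who trades the other way faces `p / ((1 + r) * q)`. On the contract curve `h = g / (1 + r) ^ 2`, the
price ratio `p / q = √(g * h) = g / (1 + r)` makes these equal to the two traders' marginal rates of
substitution `g` and `h`. The scale of `p` and `q` is chosen so that each trader's purchase tax uses
up exactly the `n` tokens. So each bundle lies on a budget line tangent there to an indifference
curve, and it is optimal because `√` lies below its tangent lines.
-/

theorem sqrt_le_sqrt_add_sub_div {a x : ℝ} (ha : 0 < a) (hx : 0 ≤ x) :
    √x ≤ √a + (x - a) / (2 * √a) := by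
  have amgm : 2 * √x * √a ≤ x + a := by
    simpa only [Real.sq_sqrt hx, Real.sq_sqrt ha.le] using two_mul_le_add_sq √x √a
  calc √x ≤ (x + a) / (2 * √a) := by rw [le_div_iff₀ (by positivity)]; linarith
    _ = √a + (x - a) / (2 * √a) := by
      field_simp
      rw [Real.sq_sqrt ha.le]
      ring

theorem sqrt_mul_div_sq {g c : ℝ} (hg : 0 ≤ g) (hc : 0 ≤ c) : √(g * (g / c ^ 2)) = g / c := by
  rw [show g * (g / c ^ 2) = (g / c) ^ 2 by ring, Real.sqrt_sq (by positivity)]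

theorem u_comm (x y : ℝ) : u x y = u y x :=
  add_comm _ _

theorem u_le_of_expenditure_le {P Q a b x y : ℝ} (hQ : 0 < Q) (ha : 0 < a) (hb : 0 < b)
    (hx : 0 ≤ x) (hy : 0 ≤ y) (hmrs : √(b / a) = P / Q)
    (hcost : P * x + Q * y ≤ P * a + Q * b) : u x y ≤ u a b := by
  have ha' : 0 < √a := Real.sqrt_pos.2 ha
  have hb' : 0 < √b := Real.sqrt_pos.2 hb
  have first_order : √b * Q = P * √a := by
    rwa [Real.sqrt_div hb.le, div_eq_div_iff ha'.ne' hQ.ne'] at hmrs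
  have hsavings : (P * (x - a) + Q * (y - b)) / (2 * (Q * √b)) ≤ 0 :=
    div_nonpos_of_nonpos_of_nonneg (by linarith) (by positivity)
  calc u x y ≤ (√a + (x - a) / (2 * √a)) + (√b + (y - b) / (2 * √b)) :=
        add_le_add (sqrt_le_sqrt_add_sub_div ha hx) (sqrt_le_sqrt_add_sub_div hb hy)
    _ = u a b + (P * (x - a) + Q * (y - b)) / (2 * (Q * √b)) := by
      unfold u
      field_simp
      linear_combination (x - a) * first_order
    _ ≤ u a b := by linarith

/-- `IsDemand p q r n s t z`: the bundle `z` is demanded by a trader with endowment `(s, t)` and `n`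
tokens at prices `p, q` and purchase-tax rate `r`, that is, it maximizes `u` over the budget set.
Demanded bundles need not be unique, so demand is a predicate. -/
def IsDemand (p q r n s t : ℝ) (z : ℝ × ℝ) : Prop :=
  z ∈ B p q r n s t ∧ ∀ xy ∈ B p q r n s t, u xy.1 xy.2 ≤ u z.1 z.2

section Budget

variable {p q r n s t : ℝ}

theorem swap_mem_B {z : ℝ × ℝ} (hz : z ∈ B p q r n s t) : z.swap ∈ B q p r n t s := by
  obtain ⟨hx, hy, hD, hE, hF⟩ := hz
  exact ⟨hy, hx, (add_comm _ _).trans_le hF, (add_comm _ _).trans_le hE,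
    (add_comm _ _).trans_le hD⟩

theorem IsDemand.swap {z : ℝ × ℝ} (hz : IsDemand p q r n s t z) :
    IsDemand q p r n t s z.swap := by
  refine ⟨swap_mem_B hz.1, fun xy hxy => ?_⟩
  rw [u_comm xy.1, u_comm z.swap.1]
  exact hz.2 xy.swap (swap_mem_B hxy)

variable {a b : ℝ}

theorem mem_B_of_tax_fst_eq (hn : 0 ≤ n) (ha : 0 ≤ a) (hb : 0 ≤ b)
    (hbalance : p * (a - s) = q * (t - b)) (htax : r * (p * (a - s)) = n) :
    (a, b) ∈ B p q r n s t := by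
  refine ⟨ha, hb, ?_, ?_, ?_⟩ <;> dsimp only
  · calc p * (a - s) + (1 + r) * q * (b - t) = -n := by
          linear_combination (1 + r) * hbalance - htax
      _ ≤ n := neg_le_self hn
  · calc (1 + r) * p * (a - s) + (1 + r) * q * (b - t) = 0 := by
          linear_combination (1 + r) * hbalance
      _ ≤ n := hn
  · exact le_of_eq (by linear_combination hbalance + htax)

theorem isDemand_of_tax_fst_eq (hn : 0 ≤ n) (hq : 0 < q) (ha : 0 < a) (hb : 0 < b)
    (hbalance : p * (a - s) = q * (t - b)) (htax : r * (p * (a - s)) = n)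
    (hmrs : √(b / a) = (1 + r) * p / q) : IsDemand p q r n s t (a, b) := by
  refine ⟨mem_B_of_tax_fst_eq hn ha.le hb.le hbalance htax, ?_⟩
  rintro ⟨x, y⟩ ⟨hx, hy, -, -, hF⟩
  exact u_le_of_expenditure_le hq ha hb hx hy hmrs (by linarith)

theorem isDemand_of_tax_snd_eq (hn : 0 ≤ n) (hp : 0 < p) (ha : 0 < a) (hb : 0 < b)
    (hbalance : p * (s - a) = q * (b - t)) (htax : r * (q * (b - t)) = n)
    (hmrs : √(b / a) = p / ((1 + r) * q)) : IsDemand p q r n s t (a, b) := by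
  have hmrs_swap : √(a / b) = (1 + r) * q / p := by
    rw [← inv_div b a, Real.sqrt_inv, hmrs, inv_div]
  exact (isDemand_of_tax_fst_eq hn hp hb ha hbalance.symm htax hmrs_swap).swap

end Budget

/-- Mirror of the Edgeworth-box equilibrium theorem, for the second revised
contract curve (h = g/(1+r)², trader A buys good 1 and sells good 2): the
prices p = n/(r(f₁−s₁)) and q = n/(r(s₂−f₂)) with the allocation F form a
market equilibrium. -/
theorem edgeworth_equilibrium_mirror
    (X Y s1 s2 f1 f2 g h r n p q : ℝ)
    (hX : 0 < X) (hY : 0 < Y)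
    (hs1 : 0 ≤ s1) (hs1X : s1 ≤ X) (hs2 : 0 ≤ s2) (hs2Y : s2 ≤ Y)
    (hf1 : 0 < f1) (hf1X : f1 < X) (hf2 : 0 < f2) (hf2Y : f2 < Y)
    (hg : g = Real.sqrt (f2 / f1))
    (hh : h = Real.sqrt ((Y - f2) / (X - f1)))
    (hr : 0 < r)
    (hgh : h = g / (1 + r) ^ 2)
    (hAs1 : s1 < f1) (hAs2 : f2 < s2)
    (hslope : (s2 - f2) / (f1 - s1) = Real.sqrt (g * h))
    (hn : 0 < n)
    (hp : p = n / (r * (f1 - s1)))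
    (hq : q = n / (r * (s2 - f2))) :
    p / q = Real.sqrt (g * h) ∧
    ((f1, f2) ∈ B p q r n s1 s2 ∧
      ∀ xy ∈ B p q r n s1 s2, u xy.1 xy.2 ≤ u f1 f2) ∧
    ((X - f1, Y - f2) ∈ B p q r n (X - s1) (Y - s2) ∧
      ∀ xy ∈ B p q r n (X - s1) (Y - s2), u xy.1 xy.2 ≤ u (X - f1) (Y - f2)) := by
  have hbought : 0 < f1 - s1 := sub_pos.2 hAs1
  have hsold : 0 < s2 - f2 := sub_pos.2 hAs2
  have hp0 : 0 < p := by rw [hp]; positivity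
  have hq0 : 0 < q := by rw [hq]; positivity
  have hg0 : 0 ≤ g := hg ▸ Real.sqrt_nonneg _
  have hpq : p / q = √(g * h) := by rw [← hslope, hp, hq]; field_simp
  have hratio : p / q = g / (1 + r) := by
    rw [hpq, hgh, sqrt_mul_div_sq hg0 (by positivity)]
  have htax : r * (p * (f1 - s1)) = n := by rw [hp]; field_simp
  have hbalance : p * (f1 - s1) = q * (s2 - f2) := by rw [hp, hq]; field_simp
  have hmrsA : √(f2 / f1) = (1 + r) * p / q := by
    rw [← hg, mul_div_assoc, hratio]; field_simp
  have hmrsC : √((Y - f2) / (X - f1)) = p / ((1 + r) * q) := by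
    rw [← hh, hgh, mul_comm (1 + r), ← div_div, hratio]; field_simp
  refine ⟨hpq, isDemand_of_tax_fst_eq hn.le hq0 hf1 hf2 hbalance htax hmrsA,
    isDemand_of_tax_snd_eq hn.le hp0 (sub_pos.2 hf1X) (sub_pos.2 hf2Y) ?_ ?_ hmrsC⟩
  · linear_combination hbalance
  · linear_combination htax - r * hbalance
end
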